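/- For every positive integer n there exists a positive integer N = N(n) such that for every coloring χ : {1, 2, …, N} → Fin n there exist positive integers x and y with x ≤ N, x + y ≤ N, and x·y ≤ N such that χ(x) = χ(x + y) = χ(x·y). -/

import Mathlib

/-!
Call a color `c` *focused* on a set `B` if `B` lies in a nonzero dilate of the color class of `c`.
Choose a piecewise syndetic `B` on which a maximal set of colors is focused, say `B ⊆ p c • χ⁻¹{c}`
for each of them. Van der Waerden's theorem provides `y > 0` and a piecewise syndetic `D ⊆ B` with
`D + y (p c)² ⊆ B` for all these `c`, and some color `t` has a piecewise syndetic part of `y D`.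
On that part `t` is focused, in addition to all the colors focused on `B`, so by maximality `t` was
already focused on `B`. Now take `z = y d ≠ 0` of color `t` with `d ∈ D`. Writing `d = p t * x` with
`x` of color `t`, the element `d + y (p t)² = p t * (x + y p t)` of `B` gives `x + y p t` the
color `t`, while `x * (y p t) = z`. The passage to finitely many pairs `(x, y)` is compactness of
the space of colorings.
-/

open scoped Pointwise

section Compactness

variable {ι α κ : Type*}

theorem isOpen_setOf_of_dependsOn [TopologicalSpace κ] [DiscreteTopology κ] {P : (α → κ) → Prop}
    {A : Set α} (hA : A.Finite) (hP : DependsOn P A) : IsOpen {C | P C} := by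
  refine isOpen_iff_forall_mem_open.2 fun C hC => ⟨A.pi fun a => {C a}, fun C' hC' => ?_,
    isOpen_set_pi hA fun _ _ => isOpen_discrete _, fun _ _ => rfl⟩
  exact (hP hC').mpr hC

theorem exists_finset_forall_coloring [Finite κ] {P : ι → (α → κ) → Prop} {A : ι → Set α}
    (hA : ∀ i, (A i).Finite) (hP : ∀ i, DependsOn (P i) (A i)) (h : ∀ C, ∃ i, P i C) :
    ∃ I : Finset ι, ∀ C, ∃ i ∈ I, P i C := by
  let _ : TopologicalSpace κ := ⊥
  have : DiscreteTopology κ := ⟨rfl⟩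
  obtain ⟨I, hI⟩ := isCompact_univ.elim_finite_subcover (fun i => {C | P i C})
    (fun i => isOpen_setOf_of_dependsOn (hA i) (hP i)) fun C _ => Set.mem_iUnion.2 (h C)
  exact ⟨I, fun C => by simpa using hI (Set.mem_univ C)⟩

variable (κ) in
theorem exists_finset_mono_homothetic_copy [Finite κ] {M : Type*} [AddCommMonoid M]
    (S : Finset M) :
    ∃ W : Finset (ℕ+ × M), ∀ C : M → κ, ∃ w ∈ W, ∃ k, ∀ s ∈ S, C ((w.1 : ℕ) • s + w.2) = k := by
  refine exists_finset_forall_coloring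
    (A := fun w : ℕ+ × M => (fun s => (w.1 : ℕ) • s + w.2) '' (S : Set M))
    (fun w => S.finite_toSet.image _) (fun w C C' hC => ?_) fun C => ?_
  · refine propext (exists_congr fun k => forall₂_congr fun s hs => ?_)
    rw [hC _ (Set.mem_image_of_mem _ hs)]
  · obtain ⟨a, ha, b, k, hk⟩ := Combinatorics.exists_mono_homothetic_copy S C
    exact ⟨(⟨a, ha⟩, b), k, hk⟩

end Compactness

/-- Syndetic subsets of a commutative monoid: finitely many translates `B - f` cover the monoid. -/
def Syndetic {M : Type*} [AddCommMonoid M] (B : Set M) : Prop :=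
  ∃ F : Set M, F.Finite ∧ ∀ x, ∃ f ∈ F, x + f ∈ B

theorem syndetic_range_nsmul_nat {y : ℕ} (hy : 0 < y) :
    Syndetic (Set.range fun x : ℕ => y • x) := by
  refine ⟨Set.Iic y, Set.finite_Iic y, fun x => ⟨y - x % y, Nat.sub_le _ _, x / y + 1, ?_⟩⟩
  have hdiv := Nat.div_add_mod x y
  have hmod := Nat.mod_lt x hy
  simp only [smul_eq_mul, mul_add, mul_one]
  omega

/-- Piecewise syndetic subsets of a commutative monoid: the union of finitely many translates
`B - f` is thick, that is, contains a translate of every finite set. -/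
def PiecewiseSyndetic {M : Type*} [AddCommMonoid M] (B : Set M) : Prop :=
  ∃ F : Set M, F.Finite ∧ ∀ S : Set M, S.Finite → ∃ a, ∀ s ∈ S, ∃ f ∈ F, a + s + f ∈ B

namespace PiecewiseSyndetic

variable {M N : Type*} [AddCommMonoid M] [AddCommMonoid N] {A B : Set M}

theorem univ : PiecewiseSyndetic (Set.univ : Set M) :=
  ⟨{0}, Set.finite_singleton 0, fun _ _ => ⟨0, fun _ _ => ⟨0, rfl, trivial⟩⟩⟩

theorem nonempty (h : PiecewiseSyndetic B) : B.Nonempty := by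
  obtain ⟨F, -, hF⟩ := h
  obtain ⟨a, ha⟩ := hF {0} (Set.finite_singleton 0)
  obtain ⟨f, -, hf⟩ := ha 0 rfl
  exact ⟨_, hf⟩

theorem infinite [IsCancelAdd M] [Infinite M] (h : PiecewiseSyndetic B) : B.Infinite := by
  intro hB
  obtain ⟨F, hFfin, hF⟩ := h
  lift B to Finset M using hB
  lift F to Finset M using hFfin
  obtain ⟨S, hS⟩ := Infinite.exists_subset_card_eq M ((B ×ˢ F).card + 1)
  obtain ⟨a, ha⟩ := hF S S.finite_toSet
  choose! f hfF hfB using ha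
  obtain ⟨s, -, t, -, hst, heq⟩ := Finset.exists_ne_map_eq_of_card_lt_of_maps_to
    (s := S) (t := B ×ˢ F) (f := fun s => (a + s + f s, f s)) (by omega)
    fun s hs => Finset.mk_mem_product (hfB s hs) (hfF s hs)
  obtain ⟨hadd, hf⟩ := Prod.mk.inj heq
  rw [hf] at hadd
  exact hst (add_left_cancel (add_right_cancel hadd))

theorem or_of_union (h : PiecewiseSyndetic (A ∪ B)) :
    PiecewiseSyndetic A ∨ PiecewiseSyndetic B := by
  obtain ⟨F, hFfin, hF⟩ := h
  by_cases hA : ∀ S : Set M, S.Finite → ∃ a, ∀ s ∈ S, ∃ f ∈ F, a + s + f ∈ A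
  · exact .inl ⟨F, hFfin, hA⟩
  push Not at hA
  obtain ⟨S, hSfin, hS⟩ := hA
  refine .inr ⟨S + F, hSfin.add hFfin, fun T hT => ?_⟩
  obtain ⟨a, ha⟩ := hF (T + S) (hT.add hSfin)
  refine ⟨a, fun t ht => ?_⟩
  obtain ⟨s, hs, hsA⟩ := hS (a + t)
  obtain ⟨f, hf, hfAB⟩ := ha (t + s) (Set.add_mem_add ht hs)
  rw [← add_assoc] at hfAB
  exact ⟨s + f, Set.add_mem_add hs hf, add_assoc (a + t) s f ▸ hfAB.resolve_left (hsA f hf)⟩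

theorem exists_of_biUnion {ι : Type*} (I : Finset ι) {B : ι → Set M}
    (h : PiecewiseSyndetic (⋃ i ∈ I, B i)) : ∃ i ∈ I, PiecewiseSyndetic (B i) := by
  classical
  induction I using Finset.induction_on with
  | empty =>
    obtain ⟨z, hz⟩ := h.nonempty
    simp at hz
  | insert i I _ ih =>
    rw [Finset.set_biUnion_insert] at h
    rcases h.or_of_union with hi | hI
    · exact ⟨i, Finset.mem_insert_self i I, hi⟩
    · obtain ⟨j, hj, hB⟩ := ih hI
      exact ⟨j, Finset.mem_insert_of_mem hj, hB⟩

theorem exists_inter_preimage_singleton {κ : Type*} [Finite κ] (h : PiecewiseSyndetic B)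
    (χ : M → κ) : ∃ k, PiecewiseSyndetic (B ∩ χ ⁻¹' {k}) := by
  have := Fintype.ofFinite κ
  have hB : B = ⋃ k ∈ (Finset.univ : Finset κ), B ∩ χ ⁻¹' {k} := by
    ext z
    simp
  obtain ⟨k, -, hk⟩ := exists_of_biUnion Finset.univ (hB ▸ h)
  exact ⟨k, hk⟩

theorem image (h : PiecewiseSyndetic B) (φ : M →+ N) (hφ : Syndetic (Set.range φ)) :
    PiecewiseSyndetic (φ '' B) := by
  obtain ⟨F, hFfin, hF⟩ := h
  obtain ⟨G, hGfin, hG⟩ := hφ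
  choose g hgG t ht using hG
  refine ⟨G + φ '' F, hGfin.add (hFfin.image φ), fun S hS => ?_⟩
  obtain ⟨a, ha⟩ := hF (t '' S) (hS.image t)
  refine ⟨φ a, fun s hs => ?_⟩
  obtain ⟨f, hf, hfB⟩ := ha (t s) (Set.mem_image_of_mem t hs)
  refine ⟨g s + φ f, Set.add_mem_add (hgG s) (Set.mem_image_of_mem φ hf), a + t s + f, hfB, ?_⟩
  rw [map_add, map_add, ht, ← add_assoc, ← add_assoc]

theorem exists_homothetic (h : PiecewiseSyndetic B) (S : Finset M) :
    ∃ y : ℕ, 0 < y ∧ PiecewiseSyndetic {d | ∀ s ∈ S, d + y • s ∈ B} := by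
  obtain ⟨F, hFfin, hF⟩ := h
  have := hFfin.to_subtype
  obtain ⟨W, hW⟩ := exists_finset_mono_homothetic_copy F S
  suffices hU : PiecewiseSyndetic (⋃ w ∈ W, {d | ∀ s ∈ S, d + (w.1 : ℕ) • s ∈ B}) by
    obtain ⟨w, -, hw⟩ := exists_of_biUnion W hU
    exact ⟨w.1, w.1.pos, hw⟩
  let V : Set M := ⋃ w ∈ W, (fun s => (w.1 : ℕ) • s + w.2) '' S
  have hV : V.Finite := W.finite_toSet.biUnion fun w _ => S.finite_toSet.image _
  refine ⟨Prod.snd '' (W : Set (ℕ+ × M)) + F, (W.finite_toSet.image _).add hFfin,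
    fun Q hQ => ?_⟩
  obtain ⟨a, ha⟩ := hF (Q + insert 0 V) (hQ.add (hV.insert 0))
  refine ⟨a, fun q hq => ?_⟩
  have hcol : ∀ v ∈ insert 0 V, ∃ f : F, a + q + v + f ∈ B := fun v hv => by
    obtain ⟨f, hf, hfB⟩ := ha (q + v) (Set.add_mem_add hq hv)
    exact ⟨⟨f, hf⟩, by rwa [add_assoc a q v]⟩
  have : Nonempty F := ⟨(hcol 0 (Set.mem_insert 0 V)).choose⟩
  choose! C hC using hcol
  obtain ⟨w, hw, f, hf⟩ := hW C
  refine ⟨w.2 + f, Set.add_mem_add (Set.mem_image_of_mem _ hw) f.2,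
    Set.mem_biUnion hw fun s hs => ?_⟩
  have hmem := hC _ (Set.mem_insert_of_mem 0 (Set.mem_biUnion hw (Set.mem_image_of_mem _ hs)))
  rw [hf s hs] at hmem
  convert hmem using 1
  abel

end PiecewiseSyndetic

section Coloring

variable {R κ : Type*} [CommSemiring R]

/-- The colors focused on `B`: those whose color class has a nonzero dilate containing `B`. -/
def focusedColors (χ : R → κ) (B : Set R) : Set κ :=
  {c | ∃ p ≠ 0, B ⊆ (p * ·) '' (χ ⁻¹' {c})}

theorem focusedColors_anti {χ : R → κ} {A B : Set R} (h : A ⊆ B) :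
    focusedColors χ B ⊆ focusedColors χ A :=
  fun _ ⟨p, hp, hB⟩ => ⟨p, hp, h.trans hB⟩

theorem mem_focusedColors_of_subset [Nontrivial R] {χ : R → κ} {B : Set R} {c : κ}
    (h : B ⊆ χ ⁻¹' {c}) : c ∈ focusedColors χ B :=
  ⟨1, one_ne_zero, by simpa using h⟩

variable [IsCancelMulZero R]

theorem exists_mono_add_mul_of_subset_dilate {χ : R → κ} {B : Set R} {p r d : R} {c : κ}
    (hp : p ≠ 0) (hB : B ⊆ (p * ·) '' (χ ⁻¹' {c})) (hr : r ≠ 0) (hd0 : d ≠ 0) (hd : d ∈ B)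
    (hsq : d + r * p ^ 2 ∈ B) (hrd : χ (r * d) = c) :
    ∃ x y, x ≠ 0 ∧ y ≠ 0 ∧ χ (x + y) = χ x ∧ χ (x * y) = χ x := by
  obtain ⟨x, rfl, rfl⟩ := hB hd
  obtain ⟨x', hx', hxx'⟩ := hB hsq
  have hx'_eq : x' = x + r * p := mul_left_cancel₀ hp (hxx'.trans (by ring))
  have hmul : x * (r * p) = r * (p * x) := by ring
  exact ⟨x, r * p, right_ne_zero_of_mul hd0, mul_ne_zero hr hp, hx'_eq ▸ hx', hmul ▸ hrd⟩

variable [CharZero R]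

theorem focusedColors_subset_image_nsmul (χ : R → κ) (B : Set R) {y : ℕ} (hy : y ≠ 0) :
    focusedColors χ B ⊆ focusedColors χ (nsmulAddMonoidHom y '' B) := by
  rintro c ⟨p, hp, hB⟩
  refine ⟨y • p, smul_ne_zero hy hp, ?_⟩
  rintro _ ⟨z, hz, rfl⟩
  obtain ⟨x, hx, rfl⟩ := hB hz
  exact ⟨x, hx, smul_mul_assoc y p x⟩

variable [IsCancelAdd R]

theorem exists_mono_add_mul [Finite κ]
    (hR : ∀ y : ℕ, 0 < y → Syndetic (Set.range fun x : R => y • x)) (χ : R → κ) :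
    ∃ x y, x ≠ 0 ∧ y ≠ 0 ∧ χ (x + y) = χ x ∧ χ (x * y) = χ x := by
  classical
  have := Fintype.ofFinite κ
  obtain ⟨B, hB, hmax⟩ := exists_maximalFor_of_wellFoundedGT PiecewiseSyndetic (focusedColors χ)
    ⟨Set.univ, .univ⟩
  choose! p hp0 hpB using fun c (hc : c ∈ focusedColors χ B) => hc
  obtain ⟨y, hy, hD⟩ := hB.exists_homothetic (insert 0 (Finset.univ.image fun c => p c ^ 2))
  set D := {d | ∀ s ∈ insert 0 (Finset.univ.image fun c => p c ^ 2), d + y • s ∈ B}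
  have hDB : D ⊆ B := fun d hd => by simpa using hd 0 (Finset.mem_insert_self _ _)
  obtain ⟨t, ht⟩ :=
    (hD.image (nsmulAddMonoidHom y) (hR y hy)).exists_inter_preimage_singleton χ
  have hfocused : focusedColors χ B ⊆ focusedColors χ (nsmulAddMonoidHom y '' D ∩ χ ⁻¹' {t}) :=
    calc
      focusedColors χ B ⊆ focusedColors χ D := focusedColors_anti hDB
      _ ⊆ focusedColors χ (nsmulAddMonoidHom y '' D) :=
        focusedColors_subset_image_nsmul χ D hy.ne'
      _ ⊆ focusedColors χ (nsmulAddMonoidHom y '' D ∩ χ ⁻¹' {t}) :=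
        focusedColors_anti Set.inter_subset_left
  have htB : t ∈ focusedColors χ B :=
    hmax ht hfocused (mem_focusedColors_of_subset Set.inter_subset_right)
  obtain ⟨_, ⟨⟨d, hd, rfl⟩, hyd⟩, hyd0⟩ := ht.infinite.nontrivial.exists_ne 0
  have hsq : d + y • p t ^ 2 ∈ B :=
    hd _ (Finset.mem_insert_of_mem (Finset.mem_image_of_mem _ (Finset.mem_univ t)))
  simp only [nsmulAddMonoidHom_apply, nsmul_eq_mul, Set.mem_preimage] at hsq hyd hyd0
  exact exists_mono_add_mul_of_subset_dilate (hp0 t htB) (hpB t htB) (Nat.cast_ne_zero.2 hy.ne')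
    (right_ne_zero_of_mul hyd0) (hDB hd) hsq hyd

variable (κ) in
theorem stmt14_general [Finite κ]
    (hR : ∀ y : ℕ, 0 < y → Syndetic (Set.range fun x : R => y • x)) :
    ∃ I : Finset (R × R), ∀ χ : R → κ, ∃ p ∈ I, p.1 ≠ 0 ∧ p.2 ≠ 0 ∧
      χ (p.1 + p.2) = χ p.1 ∧ χ (p.1 * p.2) = χ p.1 := by
  refine exists_finset_forall_coloring (A := fun p : R × R => {p.1, p.1 + p.2, p.1 * p.2})
    (fun p => Set.toFinite _) (fun p χ χ' h => ?_) fun χ => ?_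
  · rw [h p.1 (by simp), h (p.1 + p.2) (by simp), h (p.1 * p.2) (by simp)]
  · obtain ⟨x, y, h⟩ := exists_mono_add_mul hR χ
    exact ⟨(x, y), h⟩

end Coloring

theorem stmt14 (n : ℕ) (hn : 0 < n) :
    ∃ N : ℕ, 0 < N ∧ ∀ χ : ℕ → Fin n,
      ∃ x y : ℕ, 0 < x ∧ 0 < y ∧ x ≤ N ∧ x + y ≤ N ∧ x * y ≤ N ∧
        χ (x + y) = χ x ∧ χ (x * y) = χ x := by
  obtain ⟨I, hI⟩ := stmt14_general (Fin n) fun _ => syndetic_range_nsmul_nat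
  refine ⟨I.sup (fun p => p.1 + p.2 + p.1 * p.2) + 1, Nat.succ_pos _, fun χ => ?_⟩
  obtain ⟨⟨x, y⟩, hp, hx, hy, hadd, hmul⟩ := hI χ
  have hle : x + y + x * y ≤ _ := Finset.le_sup (f := fun p => p.1 + p.2 + p.1 * p.2) hp
  exact ⟨x, y, by omega, by omega, by omega, by omega, by omega, hadd, hmul⟩
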